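/- Let A be a set with a length function μ and let 𝐰 = a₁(r₁)⋯a_k(r_k) be a word in the alphabet {a(r) : a ∈ A, r ∈ ℝ} representing w ∈ F_ℝ(A). Then ‖w‖_{F_ℝ(A;μ)} = min{ μ(𝐮) : 𝐮 is a cancellation sequence in 𝐰 }, and the minimum is attained. -/

import Mathlib

/-!
Mark in each letter `a(r)` of a word a part `a(s)` to be cut out, at the price `|s|·μ(a)`, without
asking that `s` lie between `0` and `r`. An expression of `w` as a product of conjugates of
generators is the same thing as some word for `w` with marks whose removal leaves a trivial word:
the marked parts are the conjugated generators. Two points remain.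

First, the marks can be moved to any other word for `w`. A reduction of a word to the empty word,
deleting letters and merging neighbours of the same name, costs the sum of the deleted letters. By
the normal form theorem, marks leaving a trivial word cost at least as much as some reduction; and
a reduction yields a cancellation sequence of the same cost, because a part of `a(r + s)` can be
distributed over `a(r)` and `a(s)` without increasing its length. Hence it may be assumed that a
letter `a(0)` carries no mark, and then marks are carried along when the word is modified by
deleting `a(0)` or merging neighbours.

Second, a given word has only finitely many reductions, so the cheapest one attains the norm.
-/

/-- The set of total lengths of expressions of `g` as a product of conjugates
of generators `gen i ^ {±1}`, each weighted by the length function `ℓ`. -/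
def wordNormSet {G : Type*} [Group G] {I : Type*}
    (gen : I → G) (ℓ : I → ℝ) (g : G) : Set ℝ :=
  { x | ∃ l : List (G × I × Bool),
      g = (l.map fun p => p.1 * (if p.2.2 then gen p.2.1 else (gen p.2.1)⁻¹) * p.1⁻¹).prod ∧
      x = (l.map fun p => ℓ p.2.1).sum }

/-- The conjugation-invariant word norm associated to a length function. -/
noncomputable def wordNorm {G : Type*} [Group G] {I : Type*}
    (gen : I → G) (ℓ : I → ℝ) (g : G) : ℝ :=
  sInf (wordNormSet gen ℓ g)

/-- `F_ℝ(A)`: the free product of copies of `ℝ` indexed by `A`. -/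
abbrev FR (A : Type*) : Type _ := Monoid.CoprodI (fun _ : A => Multiplicative ℝ)

/-- The generator `a(r)` of `F_ℝ(A)`. -/
def genFR (A : Type*) (p : A × ℝ) : FR A :=
  Monoid.CoprodI.of (i := p.1) (Multiplicative.ofAdd p.2)

/-- The conjugation-invariant word norm `‖·‖_{F_ℝ(A;μ)}`. -/
noncomputable def FRnorm {A : Type*} (μ : A → ℝ) : FR A → ℝ :=
  wordNorm (genFR A) (fun p => |p.2| * μ p.1)

/-- The element of `F_ℝ(A)` represented by the word `𝐰 = a₁(r₁)⋯a_k(r_k)`. -/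
def wordProd {A : Type*} (l : List (A × ℝ)) : FR A :=
  (l.map (genFR A)).prod

section ConjugationInvariantNorm

variable {G I : Type*} [Group G] {gen : I → G} {ℓ : I → ℝ}

theorem zero_mem_wordNormSet_one : 0 ∈ wordNormSet gen ℓ 1 :=
  ⟨[], rfl, rfl⟩

theorem mem_wordNormSet_gen (i : I) : ℓ i ∈ wordNormSet gen ℓ (gen i) :=
  ⟨[(1, i, true)], by simp, by simp⟩

theorem add_mem_wordNormSet_mul {g h : G} {x y : ℝ} (hx : x ∈ wordNormSet gen ℓ g)
    (hy : y ∈ wordNormSet gen ℓ h) : x + y ∈ wordNormSet gen ℓ (g * h) := by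
  obtain ⟨l, rfl, rfl⟩ := hx
  obtain ⟨m, rfl, rfl⟩ := hy
  exact ⟨l ++ m, by simp, by simp⟩

theorem mem_wordNormSet_conj {g : G} {x : ℝ} (h : G) (hx : x ∈ wordNormSet gen ℓ g) :
    x ∈ wordNormSet gen ℓ (h * g * h⁻¹) := by
  obtain ⟨l, rfl, rfl⟩ := hx
  refine ⟨l.map fun p => (h * p.1, p.2), ?_, by simp [Function.comp_def]⟩
  rw [← MulAut.conj_apply, map_list_prod, List.map_map, List.map_map]
  congr 2
  funext p
  simp [mul_assoc]

theorem wordNormSet_induction {P : G → ℝ → Prop} (one : P 1 0)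
    (conj_mul : ∀ h i g x, P g x → P (h * gen i * h⁻¹ * g) (ℓ i + x))
    (conj_inv_mul : ∀ h i g x, P g x → P (h * (gen i)⁻¹ * h⁻¹ * g) (ℓ i + x))
    {g : G} {x : ℝ} (hx : x ∈ wordNormSet gen ℓ g) : P g x := by
  obtain ⟨l, rfl, rfl⟩ := hx
  induction l with
  | nil => exact one
  | cons p l ih =>
    obtain ⟨h, i, _ | _⟩ := p
    · exact conj_inv_mul h i _ _ ih
    · exact conj_mul h i _ _ ih

end ConjugationInvariantNorm

section FreeProduct

theorem exists_eq_one_or_adjacent_of_prod_eq_one {α ι : Type*} {M : ι → Type*}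
    [∀ i, Monoid (M i)] {i : α → ι} {m : ∀ t, M (i t)} {L : List α} (hL : L ≠ [])
    (h : (L.map fun t => Monoid.CoprodI.of (m t)).prod = 1) :
    (∃ X t Y, L = X ++ t :: Y ∧ m t = 1) ∨ ∃ X t u Y, L = X ++ t :: u :: Y ∧ i t = i u := by
  classical
  contrapose! h
  obtain ⟨hone, hadj⟩ := h
  let W : Monoid.CoprodI.Word M :=
    { toList := L.map fun t => ⟨i t, m t⟩
      ne_one := by
        simp only [List.mem_map, forall_exists_index, and_imp, forall_apply_eq_imp_iff₂]
        intro t ht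
        obtain ⟨X, Y, rfl⟩ := List.append_of_mem ht
        exact hone X t Y rfl
      chain_ne := by
        rw [List.isChain_map, List.isChain_iff_forall_rel_of_append_cons_cons]
        exact fun {t u X Y} hXY => hadj X t u Y hXY }
  have hprod : W.prod = (L.map fun t => Monoid.CoprodI.of (m t)).prod := by
    simp [Monoid.CoprodI.Word.prod, W, Function.comp_def]
  rw [← hprod, ← Monoid.CoprodI.Word.prod_empty]
  intro heq
  have hW : W = .empty := Monoid.CoprodI.Word.equiv.symm.injective heq
  exact hL (List.map_eq_nil_iff.1 (congrArg Monoid.CoprodI.Word.toList hW))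

/-- The syntactic congruence of `f`: two elements are identified if `f` does not distinguish them
in any context. -/
def syntacticCon {M β : Type*} [Monoid M] (f : M → β) : Con M where
  r v w := ∀ x y, f (x * v * y) = f (x * w * y)
  iseqv := ⟨fun _ _ _ => rfl, fun h x y => (h x y).symm, fun h h' x y => (h x y).trans (h' x y)⟩
  mul' {v w v' w'} h h' x y := by
    simpa only [mul_assoc] using (h x (v' * y)).trans (by simpa only [mul_assoc] using h' (x * w) y)

variable {A : Type*}

theorem wordProd_nil : wordProd ([] : List (A × ℝ)) = 1 := rfl

theorem wordProd_cons (p : A × ℝ) (v : List (A × ℝ)) :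
    wordProd (p :: v) = genFR A p * wordProd v := by
  simp [wordProd]

theorem wordProd_append (v w : List (A × ℝ)) : wordProd (v ++ w) = wordProd v * wordProd w := by
  simp [wordProd]

theorem genFR_zero (a : A) : genFR A (a, 0) = 1 :=
  map_one (Monoid.CoprodI.of (M := fun _ : A => Multiplicative ℝ))

theorem genFR_add (a : A) (r s : ℝ) : genFR A (a, r + s) = genFR A (a, r) * genFR A (a, s) :=
  map_mul (Monoid.CoprodI.of (M := fun _ : A => Multiplicative ℝ)) _ _

theorem genFR_neg (a : A) (r : ℝ) : genFR A (a, -r) = (genFR A (a, r))⁻¹ :=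
  map_inv (Monoid.CoprodI.of (M := fun _ : A => Multiplicative ℝ)) _

theorem wordProd_surjective : Function.Surjective (wordProd (A := A)) := by
  intro g
  induction g using Monoid.CoprodI.induction_on with
  | one => exact ⟨[], rfl⟩
  | of a r => exact ⟨[(a, r.toAdd)], by simp [wordProd, genFR]⟩
  | mul g h hg hh =>
    obtain ⟨v, rfl⟩ := hg
    obtain ⟨w, rfl⟩ := hh
    exact ⟨v ++ w, wordProd_append v w⟩

theorem wordProd_append_zero_cons (x y : List (A × ℝ)) (a : A) :
    wordProd (x ++ (a, 0) :: y) = wordProd (x ++ y) := by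
  simp [wordProd_append, wordProd_cons, genFR_zero]

theorem wordProd_append_add_cons (x y : List (A × ℝ)) (a : A) (r s : ℝ) :
    wordProd (x ++ (a, r + s) :: y) = wordProd (x ++ (a, r) :: (a, s) :: y) := by
  simp [wordProd_append, wordProd_cons, genFR_add, mul_assoc]

theorem apply_eq_of_wordProd_eq {β : Type*} (f : List (A × ℝ) → β)
    (zero : ∀ x a y, f (x ++ (a, 0) :: y) = f (x ++ y))
    (add : ∀ x a r s y, f (x ++ (a, r + s) :: y) = f (x ++ (a, r) :: (a, s) :: y))
    {v w : List (A × ℝ)} (h : wordProd v = wordProd w) : f v = f w := by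
  let c := syntacticCon fun v : FreeMonoid (A × ℝ) => f v.toList
  let φ : FR A →* c.Quotient := Monoid.CoprodI.lift fun a =>
    { toFun := fun r => c.mk' (FreeMonoid.of (a, r.toAdd))
      map_one' := c.eq.2 fun x y => by simpa using zero x.toList a y.toList
      map_mul' := fun r s =>
        c.eq.2 fun x y => by simpa using add x.toList a r.toAdd s.toAdd y.toList }
  have hφ : φ.comp (FreeMonoid.lift (genFR A)) = c.mk' := FreeMonoid.hom_eq fun p => by
    simp [φ, genFR]
  have hvw : c.mk' (FreeMonoid.ofList v) = c.mk' (FreeMonoid.ofList w) := by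
    rw [← hφ, MonoidHom.comp_apply, MonoidHom.comp_apply, FreeMonoid.lift_ofList,
      FreeMonoid.lift_ofList]
    exact congrArg φ h
  simpa using c.eq.1 hvw 1 1

end FreeProduct

/-- A letter `a(exp)` in which a part `a(cut)` is marked for removal. A list of marked letters
encodes a word `𝐰` together with a word `𝐮` in the same names. -/
structure MarkedLetter (A : Type*) where
  name : A
  exp : ℝ
  cut : ℝ

namespace MarkedLetter

variable {A : Type*}

/-- The letter before the removal; `L.map whole` is the word `𝐰`. -/
def whole (t : MarkedLetter A) : A × ℝ := (t.name, t.exp)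

/-- The letter after the removal; `L.map rest` is the word `𝐰 − 𝐮`. -/
def rest (t : MarkedLetter A) : A × ℝ := (t.name, t.exp - t.cut)

/-- The letter `p` with nothing marked for removal. -/
def uncut (p : A × ℝ) : MarkedLetter A := ⟨p.1, p.2, 0⟩

/-- The total length `μ(𝐮)` of the marked parts. -/
def totalLength (μ : A → ℝ) (L : List (MarkedLetter A)) : ℝ :=
  (L.map fun t => |t.cut| * μ t.name).sum

theorem totalLength_cons (μ : A → ℝ) (t : MarkedLetter A) (L : List (MarkedLetter A)) :
    totalLength μ (t :: L) = |t.cut| * μ t.name + totalLength μ L := by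
  simp [totalLength]

theorem totalLength_append (μ : A → ℝ) (L M : List (MarkedLetter A)) :
    totalLength μ (L ++ M) = totalLength μ L + totalLength μ M := by
  simp [totalLength]

theorem exists_of_map_whole_eq_cons {L : List (MarkedLetter A)} {a : A} {r : ℝ}
    {y : List (A × ℝ)} (h : L.map whole = (a, r) :: y) :
    ∃ s Y, L = ⟨a, r, s⟩ :: Y ∧ Y.map whole = y := by
  obtain ⟨⟨b, t, s⟩, Y, rfl, hb, rfl⟩ := List.map_eq_cons_iff.1 h
  obtain ⟨rfl, rfl⟩ := Prod.mk.inj hb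
  exact ⟨s, Y, rfl, rfl⟩

theorem map_whole_map_uncut (v : List (A × ℝ)) : (v.map uncut).map whole = v := by
  simp [Function.comp_def, whole, uncut]

theorem map_rest_map_uncut (v : List (A × ℝ)) : (v.map uncut).map rest = v := by
  simp [Function.comp_def, rest, uncut]

theorem totalLength_map_uncut (μ : A → ℝ) (v : List (A × ℝ)) :
    totalLength μ (v.map uncut) = 0 := by
  simp [totalLength, Function.comp_def, uncut]

/-- `L` encodes a cancellation sequence `𝐮` in the word `𝐰`. -/
def IsCancellation (L : List (MarkedLetter A)) : Prop :=
  (∀ t ∈ L, t.cut ∈ Set.uIcc 0 t.exp) ∧ wordProd (L.map rest) = 1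

theorem totalLength_mem_wordNormSet (μ : A → ℝ) (L : List (MarkedLetter A)) :
    totalLength μ L ∈ wordNormSet (genFR A) (fun p => |p.2| * μ p.1)
      (wordProd (L.map whole) * (wordProd (L.map rest))⁻¹) := by
  induction L with
  | nil => simpa [totalLength, wordProd_nil] using zero_mem_wordNormSet_one
  | cons t L ih =>
    obtain ⟨a, r, s⟩ := t
    have hsplit : wordProd ((⟨a, r, s⟩ :: L).map whole) *
          (wordProd ((⟨a, r, s⟩ :: L).map rest))⁻¹ =
        genFR A (a, s) * (genFR A (a, r - s) *
          (wordProd (L.map whole) * (wordProd (L.map rest))⁻¹) * (genFR A (a, r - s))⁻¹) := by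
      have hr : genFR A (a, r) = genFR A (a, s) * genFR A (a, r - s) := by
        rw [← genFR_add, add_sub_cancel]
      simp only [List.map_cons, wordProd_cons, whole, rest, hr]
      group
    rw [hsplit, totalLength_cons]
    exact add_mem_wordNormSet_mul (mem_wordNormSet_gen (a, s)) (mem_wordNormSet_conj _ ih)

theorem exists_of_mem_wordNormSet {μ : A → ℝ} {g : FR A} {c : ℝ}
    (hc : c ∈ wordNormSet (genFR A) (fun p => |p.2| * μ p.1) g) :
    ∃ L : List (MarkedLetter A),
      wordProd (L.map whole) = g ∧ wordProd (L.map rest) = 1 ∧ totalLength μ L = c := by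
  have conj_mul (h : FR A) (a : A) (r : ℝ) (L : List (MarkedLetter A))
      (hL : wordProd (L.map rest) = 1) : ∃ M : List (MarkedLetter A),
      wordProd (M.map whole) = h * genFR A (a, r) * h⁻¹ * wordProd (L.map whole) ∧
        wordProd (M.map rest) = 1 ∧ totalLength μ M = |r| * μ a + totalLength μ L := by
    obtain ⟨v, rfl⟩ := wordProd_surjective h
    obtain ⟨w, hw⟩ := wordProd_surjective (wordProd v)⁻¹
    refine ⟨v.map uncut ++ ⟨a, r, r⟩ :: (w.map uncut ++ L), ?_, ?_, ?_⟩
    · simp only [List.map_append, List.map_cons, map_whole_map_uncut, wordProd_append,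
        wordProd_cons, hw, whole, mul_assoc]
    · simp only [List.map_append, List.map_cons, map_rest_map_uncut, wordProd_append,
        wordProd_cons, hw, hL, rest, sub_self, genFR_zero, one_mul, mul_one, mul_inv_cancel]
    · simp only [totalLength_append, totalLength_cons, totalLength_map_uncut, zero_add]
  refine wordNormSet_induction (P := fun g c => ∃ L : List (MarkedLetter A),
    wordProd (L.map whole) = g ∧ wordProd (L.map rest) = 1 ∧ totalLength μ L = c)
    ⟨[], rfl, rfl, rfl⟩ ?_ ?_ hc
  · rintro h ⟨a, r⟩ _ _ ⟨L, rfl, hL, rfl⟩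
    exact conj_mul h a r L hL
  · rintro h ⟨a, r⟩ _ _ ⟨L, rfl, hL, rfl⟩
    simpa only [genFR_neg, abs_neg] using conj_mul h a (-r) L hL

end MarkedLetter

open MarkedLetter

/-- `IsReductionCost μ v c` says that the word `v` can be reduced to the empty word by deleting
letters and merging adjacent letters of the same name, where the deleted letters have total length
`c`. -/
inductive IsReductionCost {A : Type*} (μ : A → ℝ) : List (A × ℝ) → ℝ → Prop
  | nil : IsReductionCost μ [] 0
  | delete {x y : List (A × ℝ)} {a : A} {r c : ℝ} :
      IsReductionCost μ (x ++ y) c → IsReductionCost μ (x ++ (a, r) :: y) (|r| * μ a + c)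
  | merge {x y : List (A × ℝ)} {a : A} {r s c : ℝ} :
      IsReductionCost μ (x ++ (a, r + s) :: y) c →
        IsReductionCost μ (x ++ (a, r) :: (a, s) :: y) c

section Reduction

variable {A : Type*} {μ : A → ℝ}

theorem exists_isReductionCost (μ : A → ℝ) (v : List (A × ℝ)) : ∃ c, IsReductionCost μ v c := by
  induction v with
  | nil => exact ⟨0, .nil⟩
  | cons p v ih =>
    obtain ⟨c, hc⟩ := ih
    exact ⟨_, hc.delete (x := [])⟩

/-- The costs of the reductions of `x ++ z` that begin by deleting the first letter of `z`. -/
def firstDeletionCosts (μ : A → ℝ) (x z : List (A × ℝ)) : Set ℝ :=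
  {c | ∃ a r y d, z = (a, r) :: y ∧ IsReductionCost μ (x ++ y) d ∧ |r| * μ a + d = c}

/-- The costs of the reductions of `x ++ z` that begin by merging the first two letters of `z`. -/
def firstMergeCosts (μ : A → ℝ) (x z : List (A × ℝ)) : Set ℝ :=
  {c | ∃ a r s y, z = (a, r) :: (a, s) :: y ∧ IsReductionCost μ (x ++ (a, r + s) :: y) c}

theorem finite_firstDeletionCosts {x z : List (A × ℝ)}
    (h : ∀ w : List (A × ℝ), w.length < (x ++ z).length → {c | IsReductionCost μ w c}.Finite) :
    (firstDeletionCosts μ x z).Finite := by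
  rcases z with _ | ⟨⟨a, r⟩, y⟩
  · exact Set.finite_empty.subset fun c ⟨_, _, _, _, hz, _⟩ => List.cons_ne_nil _ _ hz.symm
  refine ((h (x ++ y) (by simp)).image fun d => |r| * μ a + d).subset ?_
  rintro _ ⟨_, _, _, d, ⟨⟩, hd, rfl⟩
  exact ⟨d, hd, rfl⟩

theorem finite_firstMergeCosts {x z : List (A × ℝ)}
    (h : ∀ w : List (A × ℝ), w.length < (x ++ z).length → {c | IsReductionCost μ w c}.Finite) :
    (firstMergeCosts μ x z).Finite := by
  rcases z with _ | ⟨⟨a, r⟩, _ | ⟨⟨b, s⟩, y⟩⟩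
  · exact Set.finite_empty.subset fun c ⟨_, _, _, _, hz, _⟩ => List.cons_ne_nil _ _ hz.symm
  · exact Set.finite_empty.subset fun c ⟨_, _, _, _, hz, _⟩ => by simp at hz
  refine (h (x ++ (a, r + s) :: y) (by simp)).subset ?_
  rintro c ⟨_, _, _, _, ⟨⟩, hc⟩
  exact hc

theorem finite_setOf_isReductionCost (μ : A → ℝ) (v : List (A × ℝ)) :
    {c | IsReductionCost μ v c}.Finite := by
  induction hn : v.length using Nat.strong_induction_on generalizing v with
  | _ n ih =>
    subst hn
    have hsub : {c | IsReductionCost μ v c} ⊆ {0} ∪ ⋃ k ∈ Set.Iio v.length,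
        (firstDeletionCosts μ (v.take k) (v.drop k) ∪ firstMergeCosts μ (v.take k) (v.drop k)) := by
      rintro c (_ | @⟨x, y, a, r, d, hd⟩ | @⟨x, y, a, r, s, _, hc⟩)
      · exact .inl rfl
      · exact .inr (Set.mem_biUnion (x := x.length) (by simp)
          (.inl ⟨a, r, y, d, by simp, by simpa using hd, rfl⟩))
      · exact .inr (Set.mem_biUnion (x := x.length) (by simp)
          (.inr ⟨a, r, s, y, by simp, by simpa using hc⟩))
    have hshort (k : ℕ) (w : List (A × ℝ)) (hw : w.length < (v.take k ++ v.drop k).length) :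
        {c | IsReductionCost μ w c}.Finite :=
      ih _ (by rwa [List.take_append_drop] at hw) w rfl
    have hfin := (Set.finite_Iio v.length).biUnion fun k _ =>
      (finite_firstDeletionCosts (hshort k)).union (finite_firstMergeCosts (hshort k))
    exact ((Set.finite_singleton 0).union hfin).subset hsub

theorem exists_uIcc_add_eq {R : Type*} [AddCommGroup R] [LinearOrder R] [IsOrderedAddMonoid R]
    {r s t : R} (ht : t ∈ Set.uIcc 0 (r + s)) :
    ∃ p ∈ Set.uIcc 0 r, ∃ q ∈ Set.uIcc 0 s, p + q = t ∧ |p| + |q| = |t| := by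
  by_cases hr : t ∈ Set.uIcc 0 r
  · exact ⟨t, hr, 0, Set.left_mem_uIcc, by simp, by simp⟩
  by_cases hs : t ∈ Set.uIcc 0 s
  · exact ⟨0, Set.left_mem_uIcc, t, hs, by simp, by simp⟩
  -- `r` and `s` must now have the same sign, so the parts `r` and `t - r` do not cancel.
  refine ⟨r, Set.right_mem_uIcc, t - r, ?_, add_sub_cancel r t, ?_⟩
  all_goals
    rw [Set.mem_uIcc] at *
    grind

theorem IsReductionCost.exists_isCancellation {v : List (A × ℝ)} {c : ℝ}
    (h : IsReductionCost μ v c) :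
    ∃ L : List (MarkedLetter A), L.map whole = v ∧ IsCancellation L ∧ totalLength μ L = c := by
  induction h with
  | nil => exact ⟨[], rfl, ⟨by simp, rfl⟩, rfl⟩
  | @delete x y a r c _ ih =>
    obtain ⟨L, hL, ⟨hcut, hrest⟩, rfl⟩ := ih
    obtain ⟨X, Y, rfl, rfl, rfl⟩ := List.map_eq_append_iff.1 hL
    refine ⟨X ++ ⟨a, r, r⟩ :: Y, by simp [whole], ⟨?_, ?_⟩, ?_⟩
    · simp only [List.forall_mem_append, List.forall_mem_cons] at hcut ⊢
      exact ⟨hcut.1, Set.right_mem_uIcc, hcut.2⟩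
    · simpa [rest, wordProd_append_zero_cons] using hrest
    · simp only [totalLength_append, totalLength_cons]
      ring
  | @merge x y a r s c _ ih =>
    obtain ⟨L, hL, ⟨hcut, hrest⟩, rfl⟩ := ih
    obtain ⟨X, Z, rfl, rfl, hZ⟩ := List.map_eq_append_iff.1 hL
    obtain ⟨t, Y, rfl, rfl⟩ := exists_of_map_whole_eq_cons hZ
    simp only [List.forall_mem_append, List.forall_mem_cons] at hcut
    obtain ⟨p, hp, q, hq, rfl, hpq⟩ := exists_uIcc_add_eq hcut.2.1
    refine ⟨X ++ ⟨a, r, p⟩ :: ⟨a, s, q⟩ :: Y, by simp [whole], ⟨?_, ?_⟩, ?_⟩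
    · simp only [List.forall_mem_append, List.forall_mem_cons]
      exact ⟨hcut.1, hp, hq, hcut.2.2⟩
    · simpa [rest, add_sub_add_comm, wordProd_append_add_cons] using hrest
    · simp only [totalLength_append, totalLength_cons, ← hpq]
      ring

theorem exists_isReductionCost_le (hμ : ∀ a, 0 ≤ μ a) (L : List (MarkedLetter A))
    (hL : wordProd (L.map rest) = 1) :
    ∃ c ≤ totalLength μ L, IsReductionCost μ (L.map whole) c := by
  induction hn : L.length using Nat.strong_induction_on generalizing L with
  | _ n ih =>
    subst hn
    rcases eq_or_ne L [] with rfl | hne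
    · exact ⟨0, le_rfl, .nil⟩
    have hprod : (L.map fun t => Monoid.CoprodI.of (M := fun _ : A => Multiplicative ℝ)
        (i := t.name) (.ofAdd (t.exp - t.cut))).prod = 1 := by
      rwa [wordProd, List.map_map] at hL
    rcases exists_eq_one_or_adjacent_of_prod_eq_one hne hprod with
      ⟨X, ⟨a, r, s⟩, Y, rfl, hrs⟩ | ⟨X, ⟨a, r, p⟩, ⟨b, s, q⟩, Y, rfl, rfl⟩
    · obtain rfl : r = s := sub_eq_zero.1 (Multiplicative.ofAdd.injective hrs)
      obtain ⟨c, hc, hred⟩ := ih _ (by simp) (X ++ Y)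
        (by simpa [rest, wordProd_append_zero_cons] using hL) rfl
      rw [List.map_append] at hred
      refine ⟨_, ?_, by simpa [whole] using hred.delete⟩
      simp only [totalLength_append, totalLength_cons] at hc ⊢
      linarith
    · obtain ⟨c, hc, hred⟩ := ih _ (by simp) (X ++ ⟨a, r + s, p + q⟩ :: Y)
        (by simpa [rest, add_sub_add_comm, wordProd_append_add_cons] using hL) rfl
      refine ⟨c, hc.trans ?_, by simpa [whole] using .merge (by simpa [whole] using hred)⟩
      have habs : |p + q| * μ a ≤ |p| * μ a + |q| * μ a := by
        rw [← add_mul]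
        exact mul_le_mul_of_nonneg_right (abs_add_le p q) (hμ a)
      simp only [totalLength_append, totalLength_cons]
      linarith

/-- The upper bounds for the cost of making the word `v` trivial by changing its exponents. The new
exponents are not required to lie between `0` and the old ones. -/
def trivializationCosts (μ : A → ℝ) (v : List (A × ℝ)) : Set ℝ :=
  {c | ∃ L : List (MarkedLetter A),
    L.map whole = v ∧ wordProd (L.map rest) = 1 ∧ totalLength μ L ≤ c}

theorem trivializationCosts_append_zero_cons (hμ : ∀ a, 0 ≤ μ a) (x : List (A × ℝ)) (a : A)
    (y : List (A × ℝ)) :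
    trivializationCosts μ (x ++ (a, 0) :: y) = trivializationCosts μ (x ++ y) := by
  ext c
  constructor
  · rintro ⟨L, hL, hrest, hc⟩
    obtain ⟨d, hd, hred⟩ := exists_isReductionCost_le hμ L hrest
    obtain ⟨M, hM, ⟨hcut, hrest⟩, rfl⟩ := hred.exists_isCancellation
    obtain ⟨X, Z, rfl, rfl, hZ⟩ := List.map_eq_append_iff.1 (hM.trans hL)
    obtain ⟨s, Y, rfl, rfl⟩ := exists_of_map_whole_eq_cons hZ
    obtain rfl : s = 0 := by simpa using hcut ⟨a, 0, s⟩ (by simp)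
    refine ⟨X ++ Y, List.map_append, by simpa [rest, wordProd_append_zero_cons] using hrest, ?_⟩
    exact le_trans (by simp [totalLength]) (hd.trans hc)
  · rintro ⟨L, hL, hrest, hc⟩
    obtain ⟨X, Y, rfl, rfl, rfl⟩ := List.map_eq_append_iff.1 hL
    exact ⟨X ++ ⟨a, 0, 0⟩ :: Y, by simp [whole],
      by simpa [rest, wordProd_append_zero_cons] using hrest, by simpa [totalLength] using hc⟩

theorem trivializationCosts_append_add_cons (hμ : ∀ a, 0 ≤ μ a) (x : List (A × ℝ)) (a : A)
    (r s : ℝ) (y : List (A × ℝ)) :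
    trivializationCosts μ (x ++ (a, r + s) :: y) =
      trivializationCosts μ (x ++ (a, r) :: (a, s) :: y) := by
  ext c
  constructor
  · rintro ⟨L, hL, hrest, hc⟩
    obtain ⟨X, Z, rfl, rfl, hZ⟩ := List.map_eq_append_iff.1 hL
    obtain ⟨t, Y, rfl, rfl⟩ := exists_of_map_whole_eq_cons hZ
    refine ⟨X ++ ⟨a, r, t⟩ :: ⟨a, s, 0⟩ :: Y, by simp [whole], ?_, by simpa [totalLength] using hc⟩
    simpa [rest, add_sub_right_comm, wordProd_append_add_cons] using hrest
  · rintro ⟨L, hL, hrest, hc⟩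
    obtain ⟨X, Z, rfl, rfl, hZ⟩ := List.map_eq_append_iff.1 hL
    obtain ⟨p, W, rfl, hW⟩ := exists_of_map_whole_eq_cons hZ
    obtain ⟨q, Y, rfl, rfl⟩ := exists_of_map_whole_eq_cons hW
    refine ⟨X ++ ⟨a, r + s, p + q⟩ :: Y, by simp [whole],
      by simpa [rest, add_sub_add_comm, wordProd_append_add_cons] using hrest, le_trans ?_ hc⟩
    have habs := mul_le_mul_of_nonneg_right (abs_add_le p q) (hμ a)
    simp only [totalLength_append, totalLength_cons]
    linarith

theorem exists_isReductionCost_le_of_mem_wordNormSet (hμ : ∀ a, 0 ≤ μ a) {v : List (A × ℝ)} {x : ℝ}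
    (hx : x ∈ wordNormSet (genFR A) (fun p => |p.2| * μ p.1) (wordProd v)) :
    ∃ c ≤ x, IsReductionCost μ v c := by
  obtain ⟨L, hLv, hrest, rfl⟩ := exists_of_mem_wordNormSet hx
  have hmem : totalLength μ L ∈ trivializationCosts μ (L.map whole) := ⟨L, rfl, hrest, le_rfl⟩
  rw [apply_eq_of_wordProd_eq (trivializationCosts μ) (trivializationCosts_append_zero_cons hμ)
    (trivializationCosts_append_add_cons hμ) hLv] at hmem
  obtain ⟨M, rfl, hM, hML⟩ := hmem
  obtain ⟨c, hc, hred⟩ := exists_isReductionCost_le hμ M hM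
  exact ⟨c, hc.trans hML, hred⟩

end Reduction

/-- The total lengths of the cancellation sequences in the word `l`. -/
def cancellationLengths {A : Type*} (μ : A → ℝ) (l : List (A × ℝ)) : Set ℝ :=
  {x | ∃ L : List (MarkedLetter A), L.map whole = l ∧ IsCancellation L ∧ totalLength μ L = x}

theorem exists_ofFn_eq_of_map_whole_eq {A : Type*} {L : List (MarkedLetter A)} {l : List (A × ℝ)}
    (hL : L.map whole = l) :
    ∃ s : Fin l.length → ℝ, L = List.ofFn fun i => ⟨(l.get i).1, (l.get i).2, s i⟩ := by
  subst hL
  refine ⟨fun i => (L.get (i.cast (List.length_map _))).cut, List.ext_getElem (by simp) ?_⟩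
  simp [whole]

theorem cancellationLengths_eq {A : Type*} (μ : A → ℝ) (l : List (A × ℝ)) :
    cancellationLengths μ l =
      { x : ℝ | ∃ s : Fin l.length → ℝ,
          (∀ i, s i ∈ Set.uIcc 0 (l.get i).2) ∧
          (List.ofFn (fun i : Fin l.length =>
            genFR A ((l.get i).1, (l.get i).2 - s i))).prod = 1 ∧
          x = ∑ i, |s i| * μ (l.get i).1 } := by
  have hiff (s : Fin l.length → ℝ) :
      IsCancellation (List.ofFn fun i => ⟨(l.get i).1, (l.get i).2, s i⟩) ↔
        (∀ i, s i ∈ Set.uIcc 0 (l.get i).2) ∧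
          (List.ofFn fun i => genFR A ((l.get i).1, (l.get i).2 - s i)).prod = 1 := by
    rw [IsCancellation, List.forall_mem_ofFn_iff, wordProd, List.map_ofFn, List.map_ofFn]
    rfl
  have hlength (s : Fin l.length → ℝ) :
      totalLength μ (List.ofFn fun i => ⟨(l.get i).1, (l.get i).2, s i⟩) =
        ∑ i, |s i| * μ (l.get i).1 := by
    rw [totalLength, List.map_ofFn, List.sum_ofFn]
    rfl
  ext x
  constructor
  · rintro ⟨L, hL, hcancel, rfl⟩
    obtain ⟨s, rfl⟩ := exists_ofFn_eq_of_map_whole_eq hL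
    exact ⟨s, ((hiff s).1 hcancel).1, ((hiff s).1 hcancel).2, hlength s⟩
  · rintro ⟨s, hs, hprod, rfl⟩
    refine ⟨_, ?_, (hiff s).2 ⟨hs, hprod⟩, hlength s⟩
    rw [List.map_ofFn]
    exact List.ofFn_get l

theorem cancellationLengths_subset_wordNormSet {A : Type*} (μ : A → ℝ) (l : List (A × ℝ)) :
    cancellationLengths μ l ⊆
      wordNormSet (genFR A) (fun p => |p.2| * μ p.1) (wordProd l) := by
  rintro _ ⟨L, rfl, ⟨-, hrest⟩, rfl⟩
  simpa [hrest] using totalLength_mem_wordNormSet μ L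

/-- for a word `𝐰 = a₁(r₁)⋯a_k(r_k)` representing `w ∈ F_ℝ(A)`,
`‖w‖_{F_ℝ(A;μ)}` equals the minimum of `μ(𝐮) = Σᵢ |sᵢ|·μ(aᵢ)` over all cancellation
sequences `𝐮 = a₁(s₁)⋯a_k(s_k)` in `𝐰` (i.e. `sᵢ` between `0` and `rᵢ`, and
`𝐰 − 𝐮 = a₁(r₁−s₁)⋯a_k(r_k−s_k)` representing `1`), and the minimum is attained. -/
theorem FRnorm_cancellation
    {A : Type*} (μ : A → ℝ) (hμ : ∀ a, 0 ≤ μ a) (l : List (A × ℝ)) :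
    IsLeast
      { x : ℝ | ∃ s : Fin l.length → ℝ,
          (∀ i, s i ∈ Set.uIcc 0 (l.get i).2) ∧
          (List.ofFn (fun i : Fin l.length =>
            genFR A ((l.get i).1, (l.get i).2 - s i))).prod = 1 ∧
          x = ∑ i, |s i| * μ (l.get i).1 }
      (FRnorm μ (wordProd l)) := by
  rw [← cancellationLengths_eq]
  obtain ⟨m, hm, hmin⟩ := Set.exists_min_image _ id (finite_setOf_isReductionCost μ l)
    (exists_isReductionCost μ l)
  have hmem : m ∈ cancellationLengths μ l := hm.exists_isCancellation
  have hsub := cancellationLengths_subset_wordNormSet μ l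
  have hleast : IsLeast (wordNormSet (genFR A) (fun p => |p.2| * μ p.1) (wordProd l)) m := by
    refine ⟨hsub hmem, fun x hx => ?_⟩
    obtain ⟨c, hcx, hc⟩ := exists_isReductionCost_le_of_mem_wordNormSet hμ hx
    exact (hmin c hc).trans hcx
  have hnorm : FRnorm μ (wordProd l) = m := hleast.csInf_eq
  rw [hnorm]
  exact ⟨hmem, fun x hx => hleast.2 (hsub hx)⟩
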